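/- arXiv:1912.10709 — 2 statements merged into one kernel-verified Lean document; each statement's English description precedes it below -/
import Mathlib

section
/- Let n ≥ 3, σ > 0, ρ ∈ (−1/n, 1), and let Z ~ N(μ, σ²Ξ) be an n-dimensional Gaussian random vector, where Ξ is the n×n matrix with diagonal entries 1 and all off-diagonal entries ρ, and suppose Pμ ≠ 0. Then MD(χ(Z)) = χ(μ) and MRL(χ(Z)) = ϱ_{n−1}(‖Pμ‖/(σ√(1−ρ))). -/
open MeasureTheory ProbabilityTheory Matrix

noncomputable section

def euclNorm {n : ℕ} (x : Fin n → ℝ) : ℝ := Real.sqrt (∑ i, x i ^ 2)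

def centerMat (n : ℕ) : Matrix (Fin n) (Fin n) ℝ :=
  1 - (n : ℝ)⁻¹ • Matrix.of (fun _ _ => (1 : ℝ))

def chi {n : ℕ} (z : Fin n → ℝ) : Fin n → ℝ :=
  (euclNorm ((centerMat n).mulVec z))⁻¹ • (centerMat n).mulVec z

def meanVec {Ω : Type*} [MeasurableSpace Ω] (P : Measure Ω) {n : ℕ}
    (X : Ω → Fin n → ℝ) : Fin n → ℝ := fun i => ∫ ω, X ω i ∂P

def covMatrix {Ω : Type*} [MeasurableSpace Ω] (P : Measure Ω) {n : ℕ}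
    (X : Ω → Fin n → ℝ) : Matrix (Fin n) (Fin n) ℝ :=
  Matrix.of fun i j => ∫ ω, (X ω i - meanVec P X i) * (X ω j - meanVec P X j) ∂P

def MRL {Ω : Type*} [MeasurableSpace Ω] (P : Measure Ω) {n : ℕ}
    (X : Ω → Fin n → ℝ) : ℝ := euclNorm (meanVec P X)

def MD {Ω : Type*} [MeasurableSpace Ω] (P : Measure Ω) {n : ℕ}
    (X : Ω → Fin n → ℝ) : Fin n → ℝ := (euclNorm (meanVec P X))⁻¹ • meanVec P X

def stdGaussianPi (n : ℕ) : Measure (Fin n → ℝ) :=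
  Measure.pi fun _ => gaussianReal 0 1

def IsGaussianVec {Ω : Type*} [MeasurableSpace Ω] (P : Measure Ω) {n : ℕ}
    (Z : Ω → Fin n → ℝ) (m : Fin n → ℝ) (S : Matrix (Fin n) (Fin n) ℝ) : Prop :=
  ∃ A : Matrix (Fin n) (Fin n) ℝ, A * Aᵀ = S ∧
    Measure.map Z P = Measure.map (fun x => m + A.mulVec x) (stdGaussianPi n)

def ascFact (a : ℝ) (k : ℕ) : ℝ := ∏ i ∈ Finset.range k, (a + i)

def kummerM (a b z : ℝ) : ℝ := ∑' k : ℕ, (ascFact a k / ascFact b k) * z ^ k / (Nat.factorial k)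

def varrho (m : ℕ) (x : ℝ) : ℝ :=
  (Real.Gamma (((m : ℝ) + 1) / 2) / (Real.sqrt 2 * Real.Gamma (((m : ℝ) + 2) / 2))) * x *
    kummerM (1 / 2) (((m : ℝ) + 2) / 2) (-x ^ 2 / 2)

def fFun (m : ℕ) (x : ℝ) : ℝ :=
  1 - (((m : ℝ) - 1) / m) * kummerM 1 ((m : ℝ) / 2 + 1) (-x ^ 2 / 2) - (varrho m x) ^ 2

def gFun (m : ℕ) (x : ℝ) : ℝ :=
  (1 / (m : ℝ)) * kummerM 1 ((m : ℝ) / 2 + 1) (-x ^ 2 / 2)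

def Vmat (n : ℕ) : Matrix (Fin n) (Fin n) ℝ :=
  Matrix.of fun i j =>
    if (j : ℕ) = n - 1 then 1 / Real.sqrt n
    else if (i : ℕ) = (j : ℕ) then
      ((n : ℝ) - 1 - (j : ℕ)) / Real.sqrt (((n : ℝ) - 1 - (j : ℕ)) * ((n : ℝ) - (j : ℕ)))
    else if (j : ℕ) < (i : ℕ) then
      -(1 / Real.sqrt (((n : ℝ) - 1 - (j : ℕ)) * ((n : ℝ) - (j : ℕ))))
    else 0

def projMat (n : ℕ) : Matrix (Fin n) (Fin n) ℝ :=
  Matrix.diagonal fun i => if (i : ℕ) < n - 1 then 1 else 0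

def embedZero {n : ℕ} (v : Fin (n - 1) → ℝ) : Fin n → ℝ :=
  fun i => if h : (i : ℕ) < n - 1 then v ⟨i, h⟩ else 0

def Ximat (n : ℕ) (r : ℝ) : Matrix (Fin n) (Fin n) ℝ :=
  Matrix.of fun i j => if i = j then 1 else r

def stdNormCDF (x : ℝ) : ℝ := (gaussianReal 0 1 (Set.Iic x)).toReal

def thetaTilde : Fin 2 → ℝ := ![Real.sqrt 2 / 2, -(Real.sqrt 2 / 2)]


lemma law_eq {n k m : ℕ} (A : Matrix (Fin n) (Fin k) ℝ) (B : Matrix (Fin n) (Fin m) ℝ)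
    (h : A * Aᵀ = B * Bᵀ) :
    Measure.map (fun x => A.mulVec x) (stdGaussianPi k) =
      Measure.map (fun x => B.mulVec x) (stdGaussianPi m) := by
  have key : ∀ {k : ℕ} (A : Matrix (Fin n) (Fin k) ℝ) (L : StrongDual ℝ (Fin n → ℝ)),
      charFunDual (Measure.map (fun x => A.mulVec x) (stdGaussianPi k)) L =
        Complex.exp (-(((fun i => L (Pi.single i 1)) ⬝ᵥ
          (A * Aᵀ).mulVec (fun i => L (Pi.single i 1)) : ℝ) : ℂ) / 2) := by
    intro k A L
    have e : (fun x => A.mulVec x) = (LinearMap.toContinuousLinearMap (Matrix.mulVecLin A) : (Fin k → ℝ) → (Fin n → ℝ)) := by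
      ext x; simp
    rw [e, charFunDual_map, stdGaussianPi, charFunDual_pi]
    have : ∀ i : Fin k, charFunDual (gaussianReal 0 1)
        ((L.comp (LinearMap.toContinuousLinearMap (Matrix.mulVecLin A))).comp
          (ContinuousLinearMap.single ℝ (fun _ => ℝ) i)) =
        Complex.exp (-(((Aᵀ.mulVec (fun j => L (Pi.single j 1))) i ^ 2 : ℝ) : ℂ) / 2) := by
      intro i
      have hL : ∀ y : ℝ, ((L.comp (LinearMap.toContinuousLinearMap (Matrix.mulVecLin A))).comp
          (ContinuousLinearMap.single ℝ (fun _ => ℝ) i)) y =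
          (Aᵀ.mulVec (fun j => L (Pi.single j 1))) i * y := by
        intro y
        have h1 : ∀ v : Fin n → ℝ, L v = ∑ j, v j * L (Pi.single j 1) := by
          intro v
          conv_lhs => rw [← Finset.univ_sum_single v]
          rw [map_sum]
          refine Finset.sum_congr rfl fun j _ => ?_
          have : (Pi.single j (v j) : Fin n → ℝ) = v j • Pi.single j 1 := by
            rw [← Pi.single_smul]; simp
          rw [this, map_smul, smul_eq_mul]
        simp only [ContinuousLinearMap.comp_apply, LinearMap.coe_toContinuousLinearMap',
          ContinuousLinearMap.single_apply, Matrix.mulVecLin_apply]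
        rw [h1]
        simp only [Matrix.mulVec, dotProduct, Matrix.transpose_apply, Finset.sum_mul]
        refine Finset.sum_congr rfl fun j _ => ?_
        rw [Finset.sum_eq_single i]
        · simp; ring
        · intro b _ hb; simp [Pi.single_eq_of_ne hb]
        · simp
      have := charFun_gaussianReal (μ := 0) (v := 1) ((Aᵀ.mulVec (fun j => L (Pi.single j 1))) i)
      rw [charFun_apply_real] at this
      rw [charFunDual_apply]
      simp only [hL]
      push_cast
      rw [this]
      congr 1
      simp
      ring
    simp only [this]
    rw [← Complex.exp_sum]
    congr 1
    rw [← Finset.sum_div, Finset.sum_neg_distrib, ← Complex.ofReal_sum]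
    congr 3
    rw [← Matrix.mulVec_mulVec, Matrix.dotProduct_mulVec, ← Matrix.mulVec_transpose]
    simp [dotProduct, sq]
  have : ∀ k, IsProbabilityMeasure (stdGaussianPi k) := fun k => by
    unfold stdGaussianPi; infer_instance
  apply Measure.ext_of_charFunDual
  funext L
  rw [key, key, h]

lemma exists_V {n : ℕ} (hn : 1 ≤ n) : ∃ V : Matrix (Fin n) (Fin (n - 1)) ℝ,
    V * Vᵀ = centerMat n ∧ Vᵀ * V = 1 := by
  classical
  let o : EuclideanSpace ℝ (Fin n) := WithLp.toLp 2 (fun _ => (1 : ℝ))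
  have ho : o ≠ 0 := by
    intro h
    have := congrArg (fun v : EuclideanSpace ℝ (Fin n) => v ⟨0, hn⟩) h
    simp [o] at this
  have hfr : Module.finrank ℝ (ℝ ∙ o)ᗮ = n - 1 := by
    have : Fact (Module.finrank ℝ (EuclideanSpace ℝ (Fin n)) = (n - 1) + 1) := ⟨by simp; omega⟩
    exact Submodule.finrank_orthogonal_span_singleton ho
  let b := (stdOrthonormalBasis ℝ (ℝ ∙ o)ᗮ).reindex (finCongr hfr)
  refine ⟨Matrix.of fun i j => (b j : EuclideanSpace ℝ (Fin n)) i, ?_, ?_⟩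
  · ext i j
    have h1 := congrArg (fun v : ((ℝ ∙ o)ᗮ : Submodule ℝ _) => (v : EuclideanSpace ℝ (Fin n)) i)
      (b.orthogonalProjectionOnto_apply_eq_sum (EuclideanSpace.single j (1:ℝ)))
    have h2 : (((ℝ ∙ o)ᗮ.orthogonalProjectionOnto (EuclideanSpace.single j (1:ℝ)) :
        (ℝ ∙ o)ᗮ) : EuclideanSpace ℝ (Fin n)) = EuclideanSpace.single j 1 - (n : ℝ)⁻¹ • o := by
      have := Submodule.starProjection_orthogonal_val (K := ℝ ∙ o) (EuclideanSpace.single j (1:ℝ))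
      rw [Submodule.starProjection_singleton] at this
      have hno : ‖o‖ ^ 2 = n := by
        rw [EuclideanSpace.norm_sq_eq]; simp [o]
      simp only [Submodule.starProjection_apply] at this
      rw [this]
      simp only [RCLike.ofReal_real_eq_id, id, hno]
      simp [o, EuclideanSpace.inner_single_right]
    simp only [h2] at h1
    simp [Matrix.mul_apply, centerMat, Matrix.one_apply]
    simp [o] at h1
    rw [h1]
    simp [EuclideanSpace.inner_single_right]
    refine Finset.sum_congr rfl fun _ _ => mul_comm _ _
  · ext i j
    have := orthonormal_iff_ite.mp b.orthonormal i j
    rw [Submodule.coe_inner, PiLp.inner_apply] at this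
    simp [Matrix.mul_apply, Matrix.one_apply] at this ⊢
    rw [← this]
    refine Finset.sum_congr rfl fun _ _ => mul_comm _ _

lemma gauss_one (w s : ℝ) (hs : 0 ≤ s) (f : ℝ → ℝ) :
    ∫ y, f y * Real.exp (-s * (w + y) ^ 2 / 2) ∂(gaussianReal 0 1) =
      ((Real.sqrt (1 + s))⁻¹ * Real.exp (-(s / (1 + s)) * w ^ 2 / 2)) *
        ∫ y, f y ∂(gaussianReal (-(s * w / (1 + s))) (Real.toNNReal (1 + s)⁻¹)) := by
  have h1 : (0:ℝ) < 1 + s := by linarith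
  rw [integral_gaussianReal_eq_integral_smul (by simp),
    integral_gaussianReal_eq_integral_smul (by
      simp; linarith), ← integral_const_mul]
  congr 1
  ext y
  simp only [gaussianPDFReal, smul_eq_mul, NNReal.coe_one, Real.coe_toNNReal _ (inv_nonneg.mpr h1.le)]
  have e1 : Real.sqrt (2 * Real.pi * (1+s)⁻¹) = Real.sqrt (2 * Real.pi * 1) * (Real.sqrt (1+s))⁻¹ := by
    rw [Real.sqrt_mul (by positivity), Real.sqrt_inv]; simp
  rw [e1]
  have hs0 : Real.sqrt (1+s) ≠ 0 := by positivity
  have hp : Real.sqrt (2 * Real.pi * 1) ≠ 0 := by positivity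
  have e2 : Real.exp (-(y - 0)^2 / (2 * 1)) * Real.exp (-s * (w + y) ^ 2 / 2) =
      Real.exp (-(s / (1 + s)) * w ^ 2 / 2) *
      Real.exp (-(y - -(s * w / (1 + s)))^2 / (2 * (1+s)⁻¹)) := by
    rw [← Real.exp_add, ← Real.exp_add]
    congr 1
    field_simp
    ring
  calc _ = (Real.sqrt (2 * Real.pi * 1))⁻¹ * f y * (Real.exp (-(y - 0)^2 / (2 * 1)) * Real.exp (-s * (w + y) ^ 2 / 2)) := by ring
    _ = _ := by rw [e2]; field_simp

lemma gauss_vec {m : ℕ} (w : Fin m → ℝ) (i : Fin m) (s : ℝ) (hs : 0 ≤ s) :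
    ∫ y, (w i + y i) * Real.exp (-s * (∑ j, (w j + y j) ^ 2) / 2) ∂(stdGaussianPi m) =
      w i / (1 + s) * (((Real.sqrt (1 + s))⁻¹) ^ m *
        Real.exp (-(s / (1 + s)) * (∑ j, w j ^ 2) / 2)) := by
  have h1 : (0:ℝ) < 1 + s := by linarith
  have h0 := fun w => gauss_one w s hs (fun _ => 1)
  have hm := fun w => gauss_one w s hs (fun y => w + y)
  simp only [one_mul, integral_const, probReal_univ, smul_eq_mul, mul_one] at h0
  have hmean : ∀ w, ∫ y, (w + y) ∂(gaussianReal (-(s * w / (1 + s))) (Real.toNNReal (1 + s)⁻¹)) = w / (1+s) := by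
    intro w
    rw [integral_add (integrable_const _) ?_]
    · simp
      field_simp
      ring
    · exact (memLp_id_gaussianReal 1).integrable le_rfl
  simp only [hmean] at hm
  have := integral_fintype_prod_eq_prod (μ := fun _ : Fin m => gaussianReal 0 1)
    (fun j y => (if j = i then (w j + y) else 1) * Real.exp (-s * (w j + y) ^ 2 / 2))
  simp only [Finset.prod_mul_distrib, Finset.prod_ite_eq', Finset.mem_univ, if_true] at this
  have e1 : ∀ y : Fin m → ℝ, Real.exp (-s * (∑ j, (w j + y j) ^ 2) / 2) = ∏ j, Real.exp (-s * (w j + y j) ^ 2 / 2) := by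
    intro y
    rw [← Real.exp_sum, Finset.mul_sum, Finset.sum_div]
  unfold stdGaussianPi
  simp only [e1]
  rw [this]
  have e2 : ∀ j, ∫ y, (if j = i then (w j + y) else 1) * Real.exp (-s * (w j + y) ^ 2 / 2) ∂(gaussianReal 0 1) =
      (if j = i then w j / (1+s) else 1) * ((Real.sqrt (1 + s))⁻¹ * Real.exp (-(s / (1 + s)) * w j ^ 2 / 2)) := by
    intro j
    by_cases h : j = i
    · simp only [h, if_true]; rw [hm]; ring
    · simp only [h, if_false, one_mul]; rw [h0]
  simp only [e2, Finset.prod_mul_distrib, Finset.prod_ite_eq', Finset.mem_univ, if_true, Finset.prod_const, Finset.card_univ, Fintype.card_fin]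
  rw [← Real.exp_sum, Finset.mul_sum, Finset.sum_div]

lemma beta_int {a c : ℝ} (ha : 0 < a) (hc : 0 < c) :
    IntegrableOn (fun u : ℝ => u ^ (a - 1) * (1 - u) ^ (c - 1)) (Set.Ioo 0 1) ∧
    ∫ u in Set.Ioo (0:ℝ) 1, u ^ (a - 1) * (1 - u) ^ (c - 1) = beta a c := by
  have h1 := Complex.betaIntegral_convergent (u := a) (v := c) (by simpa) (by simpa)
  rw [intervalIntegrable_iff_integrableOn_Ioc_of_le (by simp), integrableOn_Ioc_iff_integrableOn_Ioo] at h1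
  have e : ∀ u ∈ Set.Ioo (0:ℝ) 1, ((u:ℂ) ^ ((a:ℂ) - 1) * (1 - (u:ℂ)) ^ ((c:ℂ) - 1)) =
      ((u ^ (a - 1) * (1 - u) ^ (c - 1) : ℝ) : ℂ) := by
    intro u hu
    rw [Complex.ofReal_mul, Complex.ofReal_cpow hu.1.le, Complex.ofReal_cpow (by linarith [hu.2])]
    push_cast
    rfl
  have h2 := h1.congr_fun e measurableSet_Ioo
  constructor
  · have h3 : Integrable (fun u : ℝ => u ^ (a - 1) * (1 - u) ^ (c - 1))
        (volume.restrict (Set.Ioo 0 1)) := by simpa using h2.re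
    exact h3
  · rw [beta_eq_betaIntegralReal a c ha hc, Complex.betaIntegral,
      intervalIntegral.integral_of_le (by norm_num), integral_Ioc_eq_integral_Ioo,
      setIntegral_congr_fun measurableSet_Ioo e, integral_complex_ofReal, Complex.ofReal_re]

lemma ascFact_Gamma {a : ℝ} (ha : 0 < a) (k : ℕ) :
    Real.Gamma (a + k) = ascFact a k * Real.Gamma a := by
  induction k with
  | zero => simp [ascFact]
  | succ k ih =>
    have : a + ((k + 1 : ℕ) : ℝ) = (a + k) + 1 := by push_cast; ring
    rw [this, Real.Gamma_add_one (by positivity), ih]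
    unfold ascFact
    rw [Finset.prod_range_succ]
    ring

lemma kummer_int {a c : ℝ} (ha : 0 < a) (hc : 0 < c) (z : ℝ) :
    ∫ u in Set.Ioo (0:ℝ) 1, u ^ (a - 1) * (1 - u) ^ (c - 1) * Real.exp (z * u) =
      beta a c * kummerM a (a + c) z := by
  have hb := fun k : ℕ => beta_int (a := a + k) (by positivity) hc
  let F : ℕ → ℝ → ℝ := fun k u => (z ^ k / (Nat.factorial k)) * (u ^ (a + k - 1) * (1 - u) ^ (c - 1))
  have hFint : ∀ k, Integrable (F k) (volume.restrict (Set.Ioo 0 1)) := fun k => (hb k).1.const_mul _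
  have hle : ∀ k : ℕ, beta (a + k) c ≤ beta a c := by
    intro k
    rw [← (hb k).2, ← (beta_int ha hc).2]
    refine setIntegral_mono_on (hb k).1 (beta_int ha hc).1 measurableSet_Ioo ?_
    intro u hu
    have : 0 ≤ 1 - u := by linarith [hu.2]
    have h3 : u ^ (a + k - 1) ≤ u ^ (a - 1) :=
      Real.rpow_le_rpow_of_exponent_ge hu.1 hu.2.le (by have : (0:ℝ) ≤ k := by positivity
                                                        linarith)
    gcongr
  have hnorm : ∀ k, ∫ u in Set.Ioo (0:ℝ) 1, ‖F k u‖ = |z| ^ k / (Nat.factorial k) * beta (a + k) c := by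
    intro k
    rw [← (hb k).2, ← integral_const_mul]
    refine setIntegral_congr_fun measurableSet_Ioo ?_
    intro u hu
    have h1 : 0 ≤ 1 - u := by linarith [hu.2]
    have h0 := hu.1.le
    have h2 : 0 ≤ (u ^ (a + k - 1) * (1 - u) ^ (c - 1)) := by positivity
    simp only [F, norm_mul, norm_div, norm_pow, Real.norm_eq_abs, abs_of_nonneg (Real.rpow_nonneg h0 _),
      abs_of_nonneg (Real.rpow_nonneg h1 _), Nat.abs_cast]
  have hsum : Summable fun k => ∫ u in Set.Ioo (0:ℝ) 1, ‖F k u‖ := by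
    simp only [hnorm]
    refine Summable.of_nonneg_of_le (fun k => ?_) (fun k => ?_)
      ((Real.summable_pow_div_factorial |z|).mul_right (beta a c))
    · have := (beta_pos (α := a + k) (by positivity) hc).le
      positivity
    · have := hle k
      gcongr
  have hs := hasSum_integral_of_summable_integral_norm hFint hsum
  have e1 : ∫ u in Set.Ioo (0:ℝ) 1, u ^ (a - 1) * (1 - u) ^ (c - 1) * Real.exp (z * u) =
      ∫ u in Set.Ioo (0:ℝ) 1, ∑' k, F k u := by
    refine setIntegral_congr_fun measurableSet_Ioo ?_
    intro u hu
    simp only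
    rw [Real.exp_eq_exp_ℝ, NormedSpace.exp_eq_tsum_div, ← tsum_mul_left]
    refine tsum_congr fun k => ?_
    simp only [F]
    have : a + k - 1 = (a - 1) + k := by ring
    rw [this, Real.rpow_add hu.1, Real.rpow_natCast, mul_pow]
    ring
  rw [e1, ← hs.tsum_eq, kummerM, ← tsum_mul_left]
  refine tsum_congr fun k => ?_
  simp only [F]
  rw [integral_const_mul, (hb k).2]
  unfold beta
  have e2 : a + k + c = (a + c) + k := by ring
  rw [e2, ascFact_Gamma ha, ascFact_Gamma (add_pos ha hc)]
  have h1 := (Real.Gamma_pos_of_pos ha).ne'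
  have h2 := (Real.Gamma_pos_of_pos (add_pos ha hc)).ne'
  have h3 : ascFact (a + c) k ≠ 0 := by
    have := Real.Gamma_pos_of_pos (s := a + c + k) (by positivity)
    rw [ascFact_Gamma (add_pos ha hc)] at this
    intro h; rw [h] at this; simp at this
  field_simp

lemma kummer_int_pos {a c : ℝ} (ha : 0 < a) (hc : 0 < c) (z : ℝ) :
    0 < ∫ u in Set.Ioo (0:ℝ) 1, u ^ (a - 1) * (1 - u) ^ (c - 1) * Real.exp (z * u) := by
  have hpos : ∀ u ∈ Set.Ioo (0:ℝ) 1, 0 < u ^ (a - 1) * (1 - u) ^ (c - 1) := by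
    intro u hu
    have h1 : 0 < 1 - u := by linarith [hu.2]
    have h0 := hu.1
    positivity
  have hint : IntegrableOn (fun u : ℝ => u ^ (a - 1) * (1 - u) ^ (c - 1) * Real.exp (z * u)) (Set.Ioo 0 1) := by
    refine Integrable.mono' ((beta_int ha hc).1.mul_const (Real.exp |z|)) ?_ ?_
    · exact Measurable.aestronglyMeasurable (by fun_prop)
    · refine ae_restrict_of_forall_mem measurableSet_Ioo (fun u hu => ?_)
      have := hpos u hu
      rw [Real.norm_eq_abs, abs_of_pos (mul_pos this (Real.exp_pos _))]
      gcongr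
      calc z * u ≤ |z| * u := by have := hu.1; gcongr; exact le_abs_self z
        _ ≤ |z| * 1 := by have := hu.2; gcongr
        _ = |z| := mul_one _
  have h0 : 0 < beta a c * Real.exp (-|z|) := mul_pos (beta_pos ha hc) (Real.exp_pos _)
  refine h0.trans_le ?_
  rw [← (beta_int ha hc).2, ← integral_mul_const]
  refine setIntegral_mono_on ((beta_int ha hc).1.mul_const _) hint measurableSet_Ioo ?_
  intro u hu
  have := hpos u hu
  gcongr
  have h4 : -|z| * 1 ≤ -|z| * u := by
    have := hu.2; have := abs_nonneg z; nlinarith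
  have h5 : -|z| * u ≤ z * u := by
    have := hu.1; gcongr; exact neg_abs_le z
  linarith

lemma change_var (m : ℕ) (q : ℝ) :
    ∫ s in Set.Ioi (0:ℝ), s ^ (1 / 2 - 1 : ℝ) *
        ((1 + s)⁻¹ * (((Real.sqrt (1 + s))⁻¹) ^ m * Real.exp (-(s / (1 + s)) * q))) =
    ∫ u in Set.Ioo (0:ℝ) 1, u ^ (1 / 2 - 1 : ℝ) * (1 - u) ^ (((m : ℝ) + 1) / 2 - 1) *
      Real.exp (-q * u) := by
  have himg : (fun s : ℝ => s / (1 + s)) '' Set.Ioi 0 = Set.Ioo 0 1 := by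
    ext u
    constructor
    · rintro ⟨s, hs, rfl⟩
      have hs : 0 < s := hs
      refine ⟨by positivity, ?_⟩
      show s / (1 + s) < 1
      rw [div_lt_one (by positivity)]; linarith
    · rintro ⟨h0, h1⟩
      have : 0 < 1 - u := by linarith
      refine ⟨u / (1 - u), div_pos h0 this, ?_⟩
      show u / (1 - u) / (1 + u / (1 - u)) = u
      field_simp
      ring
  rw [← himg, integral_image_eq_integral_abs_deriv_smul (f' := fun s => ((1 + s) ^ 2)⁻¹) measurableSet_Ioi]
  · refine setIntegral_congr_fun measurableSet_Ioi ?_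
    intro s hs
    have hs : 0 < s := hs
    have h1 : 0 < 1 + s := by positivity
    have e : 1 - s / (1 + s) = (1 + s)⁻¹ := by field_simp; ring
    simp only [smul_eq_mul]
    rw [e, abs_of_pos (by positivity), Real.div_rpow hs.le h1.le, Real.inv_rpow h1.le,
      Real.sqrt_eq_rpow, ← Real.rpow_neg h1.le, ← Real.rpow_natCast, ← Real.rpow_mul h1.le,
      ← Real.rpow_neg h1.le, div_eq_mul_inv (s ^ _), ← Real.rpow_neg h1.le,
      ← Real.rpow_natCast (1 + s) 2, ← Real.rpow_neg h1.le, ← Real.rpow_neg_one (1 + s)]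
    have e3 : (1 + s) ^ (-((2:ℕ):ℝ)) * ((1 + s) ^ (-(1/2 - 1 : ℝ)) * (1 + s) ^ (-(((m:ℝ) + 1) / 2 - 1)))
      = (1 + s) ^ (-1 : ℝ) * (1 + s) ^ (-(1/2 : ℝ) * m) := by
      simp only [← Real.rpow_add h1]
      congr 1
      push_cast
      ring
    have e4 : Real.exp (-q * (s * (1+s)^(-1:ℝ))) = Real.exp (-(s * (1+s)^(-1:ℝ)) * q) := by
      congr 1; ring
    simp only [div_eq_mul_inv s, ← Real.rpow_neg_one (1 + s)]
    rw [e4]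
    linear_combination (-(s ^ (1/2 - 1 : ℝ)) * Real.exp (-(s * (1+s)^(-1:ℝ)) * q)) * e3
  · intro s hs
    have hs : 0 < s := hs
    have h1 : 1 + s ≠ 0 := by positivity
    have h2 : HasDerivAt (fun s : ℝ => s / (1 + s)) ((1 * (1 + s) - s * 1) / (1 + s) ^ 2) s :=
      (hasDerivAt_id' s).div ((hasDerivAt_id' s).const_add 1) h1
    have e : ((1 + s) ^ 2)⁻¹ = (1 * (1 + s) - s * 1) / (1 + s) ^ 2 := by
      rw [inv_eq_one_div]; congr 1; ring
    show HasDerivWithinAt _ (((1 + s) ^ 2)⁻¹) _ _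
    rw [e]
    exact h2.hasDerivWithinAt
  · intro s hs t ht h
    have hs : 0 < s := hs
    have ht : 0 < t := ht
    have h1 : 1 + s ≠ 0 := by positivity
    have h2 : 1 + t ≠ 0 := by positivity
    have h : s / (1 + s) = t / (1 + t) := h
    field_simp at h
    linarith

lemma inv_r (r : ℝ) (hr : 0 < r) :
    IntegrableOn (fun s : ℝ => s ^ (1 / 2 - 1 : ℝ) * Real.exp (-s * r / 2)) (Set.Ioi 0) ∧
    ∫ s in Set.Ioi (0:ℝ), s ^ (1 / 2 - 1 : ℝ) * Real.exp (-s * r / 2) =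
      Real.sqrt (2 * Real.pi) * (Real.sqrt r)⁻¹ := by
  have e : ∀ s : ℝ, -s * r / 2 = -(r / 2 * s) := fun s => by ring
  have h := Real.integral_rpow_mul_exp_neg_mul_Ioi (a := 1 / 2) (r := r / 2) (by norm_num) (by positivity)
  simp only [e]
  constructor
  · have := integrableOn_rpow_mul_exp_neg_mul_rpow (p := 1) (s := 1/2 - 1) (b := r / 2) (by norm_num)
      (by norm_num) (by positivity)
    simpa using this
  · rw [h, Real.Gamma_one_half_eq, ← Real.sqrt_eq_rpow, Real.sqrt_mul (by norm_num), one_div_div,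
      Real.sqrt_div (by norm_num)]
    ring

lemma abs_div_sqrt_le {m : ℕ} (x : Fin m → ℝ) (i : Fin m) :
    |x i| * (Real.sqrt (∑ j, x j ^ 2))⁻¹ ≤ 1 := by
  rw [← div_eq_mul_inv]
  apply div_le_one_of_le₀ _ (Real.sqrt_nonneg _)
  apply Real.abs_le_sqrt
  exact Finset.single_le_sum (f := fun j => x j ^ 2) (fun j _ => sq_nonneg _) (Finset.mem_univ i)

instance (k : ℕ) : IsProbabilityMeasure (stdGaussianPi k) := by
  unfold stdGaussianPi; infer_instance

lemma mean_dir {m : ℕ} (w : Fin m → ℝ) (i : Fin m) :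
    ∫ y, (Real.sqrt (∑ j, (w j + y j) ^ 2))⁻¹ * (w i + y i) ∂(stdGaussianPi m) =
      w i * ((Real.sqrt (2 * Real.pi))⁻¹ *
        ∫ u in Set.Ioo (0:ℝ) 1, u ^ (1 / 2 - 1 : ℝ) * (1 - u) ^ (((m : ℝ) + 1) / 2 - 1) *
          Real.exp (-((∑ j, w j ^ 2) / 2) * u)) := by
  have hpi : Real.sqrt (2 * Real.pi) ≠ 0 := by positivity
  let G : (Fin m → ℝ) → ℝ → ℝ := fun y s =>
    (w i + y i) * (s ^ (1 / 2 - 1 : ℝ) * Real.exp (-s * (∑ j, (w j + y j) ^ 2) / 2))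
  have hzero : ∀ y : Fin m → ℝ, (∑ j, (w j + y j) ^ 2) = 0 → w i + y i = 0 := by
    intro y h
    rw [Finset.sum_eq_zero_iff_of_nonneg (fun j _ => sq_nonneg _)] at h
    simpa using h i (Finset.mem_univ i)
  have hcase : ∀ y : Fin m → ℝ, w i + y i = 0 ∨ 0 < (∑ j, (w j + y j) ^ 2) := by
    intro y
    rcases (Finset.sum_nonneg (fun j _ => sq_nonneg (w j + y j)) : 0 ≤ ∑ j, (w j + y j) ^ 2).eq_or_lt with h | h
    · exact Or.inl (hzero y h.symm)
    · exact Or.inr h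
  have hGint : ∀ y, Integrable (G y) (volume.restrict (Set.Ioi 0)) := by
    intro y
    rcases hcase y with h | h
    · simp [G, h]
    · exact (inv_r _ h).1.const_mul _
  have hGval : ∀ y, ∫ s in Set.Ioi (0:ℝ), G y s =
      Real.sqrt (2 * Real.pi) * ((Real.sqrt (∑ j, (w j + y j) ^ 2))⁻¹ * (w i + y i)) := by
    intro y
    rcases hcase y with h | h
    · simp [G, h]
    · simp only [G]
      rw [integral_const_mul, (inv_r _ h).2]; ring
  have hGnorm : ∀ y, ∫ s in Set.Ioi (0:ℝ), ‖G y s‖ =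
      Real.sqrt (2 * Real.pi) * (|w i + y i| * (Real.sqrt (∑ j, (w j + y j) ^ 2))⁻¹) := by
    intro y
    rcases hcase y with h | h
    · simp [G, h]
    · have : ∫ s in Set.Ioi (0:ℝ), ‖G y s‖ = ∫ s in Set.Ioi (0:ℝ), |w i + y i| *
          (s ^ (1 / 2 - 1 : ℝ) * Real.exp (-s * (∑ j, (w j + y j) ^ 2) / 2)) := by
        refine setIntegral_congr_fun measurableSet_Ioi ?_
        intro s hs
        have hs : 0 < s := hs
        simp only [G, norm_mul, Real.norm_eq_abs]
        rw [abs_of_pos (Real.rpow_pos_of_pos hs _), abs_of_pos (Real.exp_pos _)]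
      rw [this, integral_const_mul, (inv_r _ h).2]; ring
  have hmeas : Measurable (Function.uncurry G) := by
    simp only [G, Function.uncurry_def]
    fun_prop
  have hprod : Integrable (Function.uncurry G) ((stdGaussianPi m).prod (volume.restrict (Set.Ioi 0))) := by
    rw [integrable_prod_iff hmeas.aestronglyMeasurable]
    refine ⟨ae_of_all _ hGint, ?_⟩
    simp only [Function.uncurry_apply_pair, hGnorm]
    refine Integrable.const_mul ?_ _
    refine Integrable.of_bound (C := 1) (Measurable.aestronglyMeasurable (by fun_prop)) (ae_of_all _ fun y => ?_)
    have := abs_div_sqrt_le (fun j => w j + y j) i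
    rw [Real.norm_eq_abs, abs_of_nonneg (by positivity)]
    exact this
  have hswap := integral_integral_swap hprod
  simp only [hGval] at hswap
  rw [integral_const_mul] at hswap
  have hin : ∫ s in Set.Ioi (0:ℝ), ∫ y, G y s ∂(stdGaussianPi m) =
      ∫ s in Set.Ioi (0:ℝ), w i * (s ^ (1 / 2 - 1 : ℝ) *
        ((1 + s)⁻¹ * (((Real.sqrt (1 + s))⁻¹) ^ m * Real.exp (-(s / (1 + s)) * ((∑ j, w j ^ 2) / 2))))) := by
    refine setIntegral_congr_fun measurableSet_Ioi ?_
    intro s hs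
    have hs : 0 < s := hs
    have := gauss_vec w i s hs.le
    have e : ∀ y, G y s = s ^ (1 / 2 - 1 : ℝ) * ((w i + y i) * Real.exp (-s * (∑ j, (w j + y j) ^ 2) / 2)) := by
      intro y; simp only [G]; ring
    simp only [e]
    rw [integral_const_mul, this, mul_div_assoc]
    ring
  rw [hin, integral_const_mul, change_var] at hswap
  rw [mul_left_comm, ← hswap]
  field_simp

lemma center_facts {n : ℕ} (hn : 1 ≤ n) (ρ : ℝ) :
    (centerMat n)ᵀ = centerMat n ∧ centerMat n * Ximat n ρ = (1 - ρ) • centerMat n := by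
  have hn0 : (n : ℝ) ≠ 0 := by positivity
  constructor
  · ext i j
    simp [centerMat, Matrix.one_apply, eq_comm]
  · have hX : Ximat n ρ = (1 - ρ) • (1 : Matrix (Fin n) (Fin n) ℝ) +
        ρ • Matrix.of (fun _ _ => (1 : ℝ)) := by
      ext i j
      by_cases h : i = j <;> simp [Ximat, Matrix.one_apply, h]
    have hJ : centerMat n * Matrix.of (fun _ _ => (1 : ℝ)) = 0 := by
      ext i j
      simp [centerMat, Matrix.mul_apply, Matrix.one_apply, hn0]
    rw [hX, Matrix.mul_add, Matrix.mul_smul, Matrix.mul_smul, hJ]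
    simp

lemma euclNorm_sq {n : ℕ} (x : Fin n → ℝ) : euclNorm x ^ 2 = x ⬝ᵥ x := by
  unfold euclNorm
  rw [Real.sq_sqrt (Finset.sum_nonneg fun i _ => sq_nonneg _)]
  simp [dotProduct, sq]

lemma euclNorm_nonneg {n : ℕ} (x : Fin n → ℝ) : 0 ≤ euclNorm x := Real.sqrt_nonneg _

lemma euclNorm_smul {n : ℕ} (c : ℝ) (hc : 0 ≤ c) (x : Fin n → ℝ) :
    euclNorm (c • x) = c * euclNorm x := by
  unfold euclNorm
  simp only [Pi.smul_apply, smul_eq_mul, mul_pow, ← Finset.mul_sum]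
  rw [Real.sqrt_mul (sq_nonneg _), Real.sqrt_sq hc]

lemma euclNorm_iso {n m : ℕ} (V : Matrix (Fin n) (Fin m) ℝ) (hV : Vᵀ * V = 1) (x : Fin m → ℝ) :
    euclNorm (V.mulVec x) = euclNorm x := by
  have : euclNorm (V.mulVec x) ^ 2 = euclNorm x ^ 2 := by
    rw [euclNorm_sq, euclNorm_sq, Matrix.dotProduct_mulVec, ← Matrix.mulVec_transpose,
      Matrix.mulVec_mulVec, hV, Matrix.one_mulVec]
  exact (pow_left_inj₀ (euclNorm_nonneg _) (euclNorm_nonneg _) two_ne_zero).mp this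

lemma euclNorm_pos {n : ℕ} {x : Fin n → ℝ} (hx : x ≠ 0) : 0 < euclNorm x := by
  obtain ⟨i, hi⟩ := Function.ne_iff.mp hx
  apply Real.sqrt_pos.mpr
  refine Finset.sum_pos' (fun j _ => sq_nonneg _) ⟨i, Finset.mem_univ i, ?_⟩
  have : x i ≠ 0 := hi
  positivity

lemma meas_mulVec {n m : ℕ} (A : Matrix (Fin n) (Fin m) ℝ) :
    Measurable (fun x : Fin m → ℝ => A.mulVec x) :=
  (Continuous.matrix_mulVec continuous_const continuous_id).measurable

lemma meanVec_eq {Ω : Type*} [MeasurableSpace Ω] (P : Measure Ω) [IsProbabilityMeasure P]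
    {n : ℕ} (hn : 3 ≤ n) (σ ρ : ℝ) (hσ : 0 < σ) (hρ₂ : ρ < 1)
    (μ : Fin n → ℝ) (Z : Ω → Fin n → ℝ)
    (hgauss : IsGaussianVec P Z μ (σ ^ 2 • Ximat n ρ)) (c : ℝ) (hc : c = σ * Real.sqrt (1 - ρ)) :
    meanVec P (fun ω => chi (Z ω)) =
      (c⁻¹ * ((Real.sqrt (2 * Real.pi))⁻¹ *
        ∫ u in Set.Ioo (0:ℝ) 1, u ^ (1 / 2 - 1 : ℝ) * (1 - u) ^ ((((n - 1 : ℕ) : ℝ) + 1) / 2 - 1) *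
          Real.exp (-((euclNorm ((centerMat n).mulVec μ) / c) ^ 2 / 2) * u))) •
      (centerMat n).mulVec μ := by
  have hc0 : 0 < c := by
    rw [hc]; exact mul_pos hσ (Real.sqrt_pos.mpr (by linarith))
  have hc2 : c ^ 2 = σ ^ 2 * (1 - ρ) := by
    rw [hc, mul_pow, Real.sq_sqrt (by linarith)]
  obtain ⟨A, hA, hmap⟩ := hgauss
  obtain ⟨V, hV1, hV2⟩ := exists_V (n := n) (by omega)
  obtain ⟨hPt, hPX⟩ := center_facts (n := n) (by omega) ρ
  have hPP : centerMat n * centerMat n = centerMat n := by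
    rw [← hV1, Matrix.mul_assoc, ← Matrix.mul_assoc Vᵀ, hV2, Matrix.one_mul]
  have hmeasA : Measurable (fun x : Fin n → ℝ => μ + A.mulVec x) :=
    (meas_mulVec A).const_add μ
  have hZ : AEMeasurable Z P := by
    have : IsProbabilityMeasure (Measure.map (fun x => μ + A.mulVec x) (stdGaussianPi n)) :=
      Measure.isProbabilityMeasure_map hmeasA.aemeasurable
    refine aemeasurable_of_map_neZero ?_
    rw [hmap]; infer_instance
  have hlaw := law_eq (centerMat n * A) (c • V) (by
    rw [Matrix.transpose_mul, hPt, Matrix.mul_assoc, ← Matrix.mul_assoc A, hA, Matrix.smul_mul,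
      Matrix.mul_smul, ← Matrix.mul_assoc, hPX, Matrix.smul_mul, hPP, Matrix.transpose_smul,
      Matrix.smul_mul, Matrix.mul_smul, hV1, smul_smul, smul_smul, ← hc2, sq])
  set w : Fin (n - 1) → ℝ := c⁻¹ • Vᵀ.mulVec μ with hw
  have hVw : (c • V).mulVec w = (centerMat n).mulVec μ := by
    rw [hw, Matrix.mulVec_smul, Matrix.smul_mulVec, smul_smul, inv_mul_cancel₀ hc0.ne', one_smul,
      Matrix.mulVec_mulVec, hV1]
  have hnw : (euclNorm ((centerMat n).mulVec μ) / c) ^ 2 = ∑ j, w j ^ 2 := by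
    rw [← hVw, Matrix.smul_mulVec, euclNorm_smul c hc0.le, euclNorm_iso V hV2,
      mul_div_cancel_left₀ _ hc0.ne', euclNorm_sq]
    simp [dotProduct, sq]
  funext i
  have hmn : ∀ k : ℕ, Measurable (fun x : Fin k → ℝ => (euclNorm x)⁻¹) := by
    intro k; unfold euclNorm; fun_prop
  have hh : Measurable (fun x : Fin n → ℝ => (euclNorm x)⁻¹ * x i) := by
    have := hmn n; fun_prop
  have hh2 : Measurable (fun x : Fin n → ℝ => (euclNorm ((centerMat n).mulVec x))⁻¹ * (centerMat n).mulVec x i) :=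
    hh.comp (meas_mulVec _)
  have s1 : meanVec P (fun ω => chi (Z ω)) i =
      ∫ x, (euclNorm ((centerMat n).mulVec μ + (centerMat n * A).mulVec x))⁻¹ *
        ((centerMat n).mulVec μ + (centerMat n * A).mulVec x) i ∂(stdGaussianPi n) := by
    have := integral_map (φ := Z) (μ := P) hZ (f := fun x => (euclNorm ((centerMat n).mulVec x))⁻¹ * (centerMat n).mulVec x i)
      hh2.aestronglyMeasurable
    simp only [meanVec, chi, Pi.smul_apply, smul_eq_mul]
    rw [← this, hmap, integral_map hmeasA.aemeasurable hh2.aestronglyMeasurable]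
    simp only [Matrix.mulVec_add, Matrix.mulVec_mulVec]
  have hh3 : Measurable (fun x : Fin n → ℝ => (euclNorm ((centerMat n).mulVec μ + x))⁻¹ *
      ((centerMat n).mulVec μ + x) i) :=
    hh.comp (measurable_id.const_add _)
  have s2 : meanVec P (fun ω => chi (Z ω)) i =
      ∫ y, (euclNorm ((centerMat n).mulVec μ + (c • V).mulVec y))⁻¹ *
        ((centerMat n).mulVec μ + (c • V).mulVec y) i ∂(stdGaussianPi (n - 1)) := by
    rw [s1, ← integral_map (φ := fun x => (centerMat n * A).mulVec x) (meas_mulVec _).aemeasurable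
      hh3.aestronglyMeasurable, hlaw, integral_map (meas_mulVec _).aemeasurable hh3.aestronglyMeasurable]
  have s3 : ∀ y, (euclNorm ((centerMat n).mulVec μ + (c • V).mulVec y))⁻¹ *
        ((centerMat n).mulVec μ + (c • V).mulVec y) i =
        ∑ j, V i j * ((Real.sqrt (∑ j, (w j + y j) ^ 2))⁻¹ * (w j + y j)) := by
    intro y
    rw [← hVw, ← Matrix.mulVec_add, Matrix.smul_mulVec, euclNorm_smul c hc0.le, euclNorm_iso V hV2]
    simp only [Pi.smul_apply, smul_eq_mul, Matrix.mulVec, dotProduct, Pi.add_apply]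
    rw [mul_inv, mul_mul_mul_comm, inv_mul_cancel₀ hc0.ne', one_mul, Finset.mul_sum]
    refine Finset.sum_congr rfl fun j _ => ?_
    simp only [euclNorm, Pi.add_apply]
    ring
  rw [s2]
  simp only [s3]
  rw [integral_finsetSum]
  · simp only [integral_const_mul, mean_dir]
    rw [hnw, Pi.smul_apply, ← hVw]
    simp only [Matrix.smul_mulVec, Pi.smul_apply, smul_eq_mul, Matrix.mulVec, dotProduct]
    rw [Finset.mul_sum]
    refine Finset.sum_congr rfl fun j _ => ?_
    rw [Matrix.smul_apply, smul_eq_mul]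
    generalize (∫ u in Set.Ioo (0:ℝ) 1, (_ : ℝ)) = T
    field_simp
  · intro j _
    refine Integrable.const_mul ?_ _
    refine Integrable.of_bound (C := 1) (Measurable.aestronglyMeasurable (by fun_prop)) (ae_of_all _ fun y => ?_)
    have := abs_div_sqrt_le (fun j => w j + y j) j
    rw [Real.norm_eq_abs, abs_mul, abs_of_nonneg (inv_nonneg.mpr (Real.sqrt_nonneg _)), mul_comm]
    exact this

/-- MD and MRL of `χ(Z)` for `Z ~ N(μ, σ²Ξ)`. -/
theorem stmt7 {Ω : Type*} [MeasurableSpace Ω] (P : Measure Ω) [IsProbabilityMeasure P]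
    {n : ℕ} (hn : 3 ≤ n) (σ ρ : ℝ) (hσ : 0 < σ)
    (hρ₁ : -(1 / (n : ℝ)) < ρ) (hρ₂ : ρ < 1)
    (μ : Fin n → ℝ) (Z : Ω → Fin n → ℝ)
    (hgauss : IsGaussianVec P Z μ (σ ^ 2 • Ximat n ρ))
    (hPμ : (centerMat n).mulVec μ ≠ 0) :
    MD P (fun ω => chi (Z ω)) = chi μ ∧
    MRL P (fun ω => chi (Z ω)) =
      varrho (n - 1) (euclNorm ((centerMat n).mulVec μ) / (σ * Real.sqrt (1 - ρ))) := by
  set c := σ * Real.sqrt (1 - ρ) with hc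
  have hc0 : 0 < c := mul_pos hσ (Real.sqrt_pos.mpr (by linarith))
  have hmean := meanVec_eq P hn σ ρ hσ hρ₂ μ Z hgauss c hc
  set v := (centerMat n).mulVec μ with hv
  set x := euclNorm v / c with hx
  have hm : (0:ℝ) < (((n - 1 : ℕ) : ℝ) + 1) / 2 := by positivity
  have hpos := kummer_int_pos (a := 1 / 2) (by norm_num) hm (-(x ^ 2 / 2))
  have hval := kummer_int (a := 1 / 2) (by norm_num) hm (-(x ^ 2 / 2))
  set I := ∫ u in Set.Ioo (0:ℝ) 1, u ^ (1 / 2 - 1 : ℝ) * (1 - u) ^ ((((n - 1 : ℕ) : ℝ) + 1) / 2 - 1) *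
          Real.exp (-(x ^ 2 / 2) * u) with hI
  set K := c⁻¹ * ((Real.sqrt (2 * Real.pi))⁻¹ * I) with hK
  have hK0 : 0 < K := by positivity
  have hv0 := euclNorm_pos hPμ
  have hnorm : euclNorm (meanVec P (fun ω => chi (Z ω))) = K * euclNorm v := by
    rw [hmean, euclNorm_smul K hK0.le]
  constructor
  · unfold MD
    rw [hnorm, hmean, smul_smul]
    unfold chi
    rw [← hv]
    congr 1
    field_simp
  · unfold MRL
    rw [hnorm, hK, hval]
    unfold varrho beta
    have e1 : (1 / 2 : ℝ) + (((n - 1 : ℕ) : ℝ) + 1) / 2 = (((n - 1 : ℕ) : ℝ) + 2) / 2 := by ring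
    have e2 : -(x ^ 2 / 2) = -x ^ 2 / 2 := by ring
    have h2 : Real.sqrt (2 * Real.pi) = Real.sqrt 2 * Real.sqrt Real.pi := Real.sqrt_mul (by norm_num) _
    have hp : Real.sqrt Real.pi ≠ 0 := by positivity
    rw [e1, e2, Real.Gamma_one_half_eq, h2, hx]
    field_simp
end
end

section
/- Let n ≥ 3, λ > 0, and let ξ ~ N(ν, λ²I_n) be an n-dimensional Gaussian random vector with mean ν = (‖ν‖, 0, 0, …, 0)ᵀ. Then the covariance matrix of ξ/‖ξ‖ is diagonal; its (1,1)-entry equals E[ξ₁²/‖ξ‖²] − (E[ξ₁/‖ξ‖])², all of its remaining diagonal entries are equal to each other, and the (2,2)-entry equals (1/(n−1))·(1 − E[ξ₁²/‖ξ‖²]). -/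
open MeasureTheory ProbabilityTheory Matrix

noncomputable section

lemma gaussVec_law {n : ℕ} (lam : ℝ) (m : Fin n → ℝ) (A : Matrix (Fin n) (Fin n) ℝ)
    (hA : A * Aᵀ = lam ^ 2 • (1 : Matrix (Fin n) (Fin n) ℝ)) :
    Measure.map (fun x => m + A.mulVec x) (stdGaussianPi n) =
      Measure.pi fun i => gaussianReal (m i) (Real.toNNReal (lam ^ 2)) := by
  have hmeas : Measurable (fun x : Fin n → ℝ => m + A.mulVec x) := by
    have : Continuous (fun x : Fin n → ℝ => m + A.mulVec x) := by fun_prop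
    exact this.measurable
  have hprob : IsProbabilityMeasure (stdGaussianPi n) := by
    unfold stdGaussianPi; infer_instance
  have hprob2 : IsProbabilityMeasure (Measure.map (fun x => m + A.mulVec x) (stdGaussianPi n)) :=
    Measure.isProbabilityMeasure_map hmeas.aemeasurable
  rw [← charFun_eq_pi_iff]
  intro t
  have hsum : ∑ i, (Aᵀ.mulVec (WithLp.ofLp t) i) ^ 2 = lam ^ 2 * ∑ i, t i ^ 2 := by
    have h1 : (Aᵀ.mulVec (WithLp.ofLp t)) ⬝ᵥ (Aᵀ.mulVec (WithLp.ofLp t)) =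
        lam ^ 2 * ((WithLp.ofLp t) ⬝ᵥ (WithLp.ofLp t)) := by
      rw [Matrix.dotProduct_mulVec, Matrix.vecMul_transpose, Matrix.mulVec_mulVec, hA,
        Matrix.smul_mulVec, Matrix.one_mulVec, smul_dotProduct, smul_eq_mul]
    simpa [dotProduct, pow_two] using h1
  have key : charFun ((Measure.map (fun x => m + A.mulVec x) (stdGaussianPi n)).map
      (WithLp.toLp 2)) t =
      Complex.exp (((∑ i, m i * t i : ℝ) : ℂ) * Complex.I) *
      charFun ((stdGaussianPi n).map (WithLp.toLp 2))
        (WithLp.toLp 2 (Aᵀ.mulVec (WithLp.ofLp t))) := by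
    rw [charFun_apply, charFun_apply, integral_map (by fun_prop) (by fun_prop),
      integral_map (by fun_prop) (by fun_prop), integral_map (by fun_prop) (by fun_prop),
      ← integral_const_mul]
    congr 1
    ext x
    rw [← Complex.exp_add]
    congr 1
    rw [← add_mul, ← Complex.ofReal_add]
    congr 2
    have h2 : (A.mulVec x) ⬝ᵥ (WithLp.ofLp t) = x ⬝ᵥ (Aᵀ.mulVec (WithLp.ofLp t)) := by
      rw [Matrix.dotProduct_mulVec, Matrix.vecMul_transpose]
    simp only [dotProduct] at h2
    simp only [PiLp.inner_apply, RCLike.inner_apply, conj_trivial, Pi.add_apply]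
    simp_rw [mul_add, Finset.sum_add_distrib]
    simp_rw [mul_comm (t _)]
    rw [h2]
    simp_rw [mul_comm (x _)]
  rw [key, stdGaussianPi, charFun_pi]
  simp_rw [charFun_gaussianReal]
  rw [← Complex.exp_sum, ← Complex.exp_sum, ← Complex.exp_add]
  congr 1
  have hc : ∑ i, ((Aᵀ.mulVec (WithLp.ofLp t) i : ℝ) : ℂ) ^ 2 =
      (lam : ℂ) ^ 2 * ∑ i, ((t i : ℝ) : ℂ) ^ 2 := by
    exact_mod_cast congrArg (fun r : ℝ => (r : ℂ)) hsum
  have hl : ((Real.toNNReal (lam ^ 2) : ℝ) : ℂ) = (lam : ℂ) ^ 2 := by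
    rw [Real.coe_toNNReal _ (sq_nonneg _)]; push_cast; rfl
  simp only [hl, Finset.sum_sub_distrib, ← Finset.sum_div, ← Finset.mul_sum, ← Finset.sum_mul]
  simp [hc]
  rw [← sub_eq_add_neg]
  simp_rw [mul_comm (t.ofLp _ : ℂ)]

lemma euclNorm_measurable {n : ℕ} : Measurable (euclNorm : (Fin n → ℝ) → ℝ) := by
  unfold euclNorm; fun_prop

def dirCoord {n : ℕ} (i : Fin n) (x : Fin n → ℝ) : ℝ := (euclNorm x)⁻¹ * x i

lemma dirCoord_measurable {n : ℕ} (i : Fin n) : Measurable (dirCoord i) := by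
  unfold dirCoord
  exact (euclNorm_measurable.inv).mul (measurable_pi_apply i)

lemma dirCoord_abs_le {n : ℕ} (i : Fin n) (x : Fin n → ℝ) : ‖dirCoord i x‖ ≤ 1 := by
  have h : |x i| ≤ euclNorm x := by
    unfold euclNorm
    apply Real.abs_le_sqrt
    exact Finset.single_le_sum (f := fun i => x i ^ 2) (fun j _ => sq_nonneg _) (Finset.mem_univ i)
  have h0 : 0 ≤ euclNorm x := Real.sqrt_nonneg _
  rw [dirCoord, Real.norm_eq_abs, abs_mul, abs_inv, abs_of_nonneg h0, inv_mul_eq_div]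
  exact div_le_one_of_le₀ h h0

lemma dirCoord_sum_sq {n : ℕ} (i : Fin n) (x : Fin n → ℝ) (hx : x i ≠ 0) :
    ∑ j, dirCoord j x ^ 2 = 1 := by
  have h : 0 < ∑ j, x j ^ 2 := by
    apply Finset.sum_pos' (fun j _ => sq_nonneg _)
    exact ⟨i, Finset.mem_univ _, by positivity⟩
  simp only [dirCoord, mul_pow, ← Finset.mul_sum, euclNorm, inv_pow, Real.sq_sqrt h.le]
  exact inv_mul_cancel₀ h.ne'

section sym
variable {n : ℕ} (ν : Fin n → ℝ) (v : NNReal)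

def gpi : Measure (Fin n → ℝ) := Measure.pi fun i => gaussianReal (ν i) v

lemma gpi_flip (k : Fin n) (hk : ν k = 0) :
    MeasurePreserving (fun (x : Fin n → ℝ) i => if i = k then - x i else x i)
      (gpi ν v) (gpi ν v) := by
  unfold gpi
  apply measurePreserving_pi _ _ (f := fun i y => if i = k then - y else y)
  intro i
  by_cases h : i = k
  · subst h
    simp only [if_true]
    refine ⟨measurable_neg, ?_⟩
    have := gaussianReal_map_neg (μ := ν i) (v := v)
    rw [this, hk, neg_zero]
  · simp only [h, if_false]
    exact MeasurePreserving.id _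

lemma gpi_swap (k l : Fin n) (h : ν k = ν l) :
    MeasurePreserving (fun (x : Fin n → ℝ) i => x (Equiv.swap k l i))
      (gpi ν v) (gpi ν v) := by
  have hs : ∀ i, ν (Equiv.swap k l i) = ν i := by
    intro i
    rw [Equiv.swap_apply_def]; split_ifs <;> simp_all
  refine ⟨by fun_prop, ?_⟩
  unfold gpi
  symm
  apply Measure.pi_eq
  intro s hs'
  rw [Measure.map_apply (by fun_prop) (MeasurableSet.univ_pi hs')]
  have : (fun (x : Fin n → ℝ) i => x (Equiv.swap k l i)) ⁻¹' (Set.univ.pi s) =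
      Set.univ.pi fun i => s (Equiv.swap k l i) := by
    ext x
    simp only [Set.mem_preimage, Set.mem_pi, Set.mem_univ, forall_true_left]
    constructor
    · intro hx i; simpa using hx (Equiv.swap k l i)
    · intro hx i
      have h2 := hx (Equiv.swap k l i)
      rwa [Equiv.swap_apply_self] at h2
  rw [this, Measure.pi_pi, ← Equiv.prod_comp (Equiv.swap k l)]
  refine Finset.prod_congr rfl fun i _ => ?_
  rw [hs, Equiv.swap_apply_self]

lemma euclNorm_flip (k : Fin n) (x : Fin n → ℝ) :
    euclNorm (fun i => if i = k then - x i else x i) = euclNorm x := by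
  unfold euclNorm
  congr 1
  refine Finset.sum_congr rfl fun i _ => ?_
  dsimp only
  split_ifs <;> simp

lemma euclNorm_swap (k l : Fin n) (x : Fin n → ℝ) :
    euclNorm (fun i => x (Equiv.swap k l i)) = euclNorm x := by
  unfold euclNorm
  congr 1
  exact Equiv.sum_comp (Equiv.swap k l) (fun i => x i ^ 2)

lemma integral_comp_pres {f : (Fin n → ℝ) → (Fin n → ℝ)} {μ : Measure (Fin n → ℝ)}
    (hf : MeasurePreserving f μ μ) (g : (Fin n → ℝ) → ℝ) (hg : Measurable g) :
    ∫ x, g (f x) ∂μ = ∫ x, g x ∂μ := by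
  conv_rhs => rw [← hf.map_eq]
  rw [integral_map hf.measurable.aemeasurable hg.aestronglyMeasurable]

lemma gpi_mean_zero (k : Fin n) (hk : ν k = 0) : ∫ x, dirCoord k x ∂(gpi ν v) = 0 := by
  have h := integral_comp_pres (gpi_flip ν v k hk) (dirCoord k) (dirCoord_measurable k)
  simp only [dirCoord, euclNorm_flip, if_true, mul_neg, integral_neg] at h
  simp only [dirCoord]
  linarith

lemma gpi_cross_zero (k l : Fin n) (hk : ν k = 0) (hl : l ≠ k) :
    ∫ x, dirCoord k x * dirCoord l x ∂(gpi ν v) = 0 := by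
  have h := integral_comp_pres (gpi_flip ν v k hk) (fun x => dirCoord k x * dirCoord l x)
    ((dirCoord_measurable k).mul (dirCoord_measurable l))
  simp only [dirCoord, euclNorm_flip, if_true, hl, if_false, mul_neg, neg_mul, integral_neg] at h
  simp only [dirCoord]
  linarith

lemma gpi_sq_eq (k l : Fin n) (h : ν k = ν l) :
    ∫ x, dirCoord k x ^ 2 ∂(gpi ν v) = ∫ x, dirCoord l x ^ 2 ∂(gpi ν v) := by
  have h := integral_comp_pres (gpi_swap ν v k l h) (fun x => dirCoord l x ^ 2)
    ((dirCoord_measurable l).pow_const 2)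
  simp only [dirCoord, euclNorm_swap, Equiv.swap_apply_right] at h
  simpa only [dirCoord] using h

lemma gpi_sum_sq (hv : v ≠ 0) (i : Fin n) :
    ∑ j, ∫ x, dirCoord j x ^ 2 ∂(gpi ν v) = 1 := by
  have hp : IsProbabilityMeasure (gpi ν v) := by unfold gpi; infer_instance
  rw [← integral_finsetSum]
  · have hae : ∀ᵐ x ∂(gpi ν v), x i ≠ 0 := by
      have hq : Measure.QuasiMeasurePreserving (Function.eval i) (gpi ν v)
          (gaussianReal (ν i) v) := by
        unfold gpi
        exact Measure.quasiMeasurePreserving_eval _ i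
      have := nullSingletonClass_gaussianReal (μ := ν i) hv
      have h0 : ∀ᵐ y ∂(gaussianReal (ν i) v), y ≠ 0 := by
        simp [ae_iff]
      exact hq.ae h0
    have : ∫ x, ∑ j, dirCoord j x ^ 2 ∂(gpi ν v) = ∫ x, (1 : ℝ) ∂(gpi ν v) :=
      integral_congr_ae (hae.mono fun x hx => dirCoord_sum_sq i x hx)
    rw [this]; simp
  · intro j _
    refine Integrable.of_bound ((dirCoord_measurable j).pow_const 2).aestronglyMeasurable 1 ?_
    refine ae_of_all _ fun x => ?_
    rw [norm_pow]
    exact pow_le_one₀ (norm_nonneg _) (dirCoord_abs_le j x)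

end sym

lemma covMatrix_dir {Ω : Type*} [MeasurableSpace Ω] (P : Measure Ω) [IsProbabilityMeasure P]
    {n : ℕ} (ξ : Ω → Fin n → ℝ) (hξ : AEMeasurable ξ P) (i j : Fin n) :
    covMatrix P (fun ω => (euclNorm (ξ ω))⁻¹ • ξ ω) i j =
      ∫ x, dirCoord i x * dirCoord j x ∂(P.map ξ) -
        (∫ x, dirCoord i x ∂(P.map ξ)) * ∫ x, dirCoord j x ∂(P.map ξ) := by
  have hp : IsProbabilityMeasure (P.map ξ) := Measure.isProbabilityMeasure_map hξ
  have hm : ∀ k, meanVec P (fun ω => (euclNorm (ξ ω))⁻¹ • ξ ω) k =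
      ∫ x, dirCoord k x ∂(P.map ξ) := by
    intro k
    rw [integral_map hξ (dirCoord_measurable k).aestronglyMeasurable]
    rfl
  have hL : ∀ k, MemLp (dirCoord k) 2 (P.map ξ) := fun k =>
    MemLp.of_bound (dirCoord_measurable k).aestronglyMeasurable 1
      (ae_of_all _ (dirCoord_abs_le k))
  have hc := covariance_eq_sub (hL i) (hL j)
  rw [covariance, integral_map hξ ] at hc
  · simp only [covMatrix, Matrix.of_apply, hm]
    exact hc
  · exact (((dirCoord_measurable i).sub_const _).mul
      ((dirCoord_measurable j).sub_const _)).aestronglyMeasurable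

/-- structure of the covariance matrix of the projected
homoscedastic normal. -/
theorem stmt14 {Ω : Type*} [MeasurableSpace Ω] (P : Measure Ω) [IsProbabilityMeasure P]
    {n : ℕ} (hn : 3 ≤ n) (lam : ℝ) (hlam : 0 < lam) (ν : Fin n → ℝ)
    (hν : ν = fun i => if i = ⟨0, by omega⟩ then euclNorm ν else 0)
    (ξ : Ω → Fin n → ℝ)
    (hgauss : IsGaussianVec P ξ ν (lam ^ 2 • (1 : Matrix (Fin n) (Fin n) ℝ))) :
    (covMatrix P (fun ω => (euclNorm (ξ ω))⁻¹ • ξ ω)).IsDiag ∧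
    covMatrix P (fun ω => (euclNorm (ξ ω))⁻¹ • ξ ω) ⟨0, by omega⟩ ⟨0, by omega⟩ =
      (∫ ω, (ξ ω ⟨0, by omega⟩) ^ 2 / (euclNorm (ξ ω)) ^ 2 ∂P) -
        (∫ ω, ξ ω ⟨0, by omega⟩ / euclNorm (ξ ω) ∂P) ^ 2 ∧
    (∀ i j : Fin n, i ≠ ⟨0, by omega⟩ → j ≠ ⟨0, by omega⟩ →
      covMatrix P (fun ω => (euclNorm (ξ ω))⁻¹ • ξ ω) i i =
      covMatrix P (fun ω => (euclNorm (ξ ω))⁻¹ • ξ ω) j j) ∧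
    covMatrix P (fun ω => (euclNorm (ξ ω))⁻¹ • ξ ω) ⟨1, by omega⟩ ⟨1, by omega⟩ =
      (1 / ((n : ℝ) - 1)) *
        (1 - ∫ ω, (ξ ω ⟨0, by omega⟩) ^ 2 / (euclNorm (ξ ω)) ^ 2 ∂P) := by
  obtain ⟨A, hA, hmap⟩ := hgauss
  rw [gaussVec_law lam ν A hA] at hmap
  set v : NNReal := Real.toNNReal (lam ^ 2) with hvdef
  have hv : v ≠ 0 := by
    have : 0 < v := Real.toNNReal_pos.mpr (by positivity)
    exact this.ne'
  change Measure.map ξ P = gpi ν v at hmap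
  have hgp : IsProbabilityMeasure (gpi ν v) := by unfold gpi; infer_instance
  have hξ : AEMeasurable ξ P := by
    by_contra hcon
    rw [Measure.map_of_not_aemeasurable hcon] at hmap
    exact IsProbabilityMeasure.ne_zero (gpi ν v) hmap.symm
  have hν0 : ∀ i : Fin n, i ≠ ⟨0, by omega⟩ → ν i = 0 := by
    intro i hi
    rw [hν]; simp [hi]
  have hcov := covMatrix_dir P ξ hξ
  rw [hmap] at hcov
  have hE2 : ∫ ω, (ξ ω ⟨0, by omega⟩) ^ 2 / (euclNorm (ξ ω)) ^ 2 ∂P =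
      ∫ x, dirCoord ⟨0, by omega⟩ x ^ 2 ∂(gpi ν v) := by
    rw [← hmap, integral_map hξ ((dirCoord_measurable _).pow_const 2).aestronglyMeasurable]
    refine integral_congr_ae (ae_of_all _ fun ω => ?_)
    simp only [dirCoord, mul_pow, inv_pow, div_eq_inv_mul]
  have hE1 : ∫ ω, ξ ω ⟨0, by omega⟩ / euclNorm (ξ ω) ∂P =
      ∫ x, dirCoord ⟨0, by omega⟩ x ∂(gpi ν v) := by
    rw [← hmap, integral_map hξ (dirCoord_measurable _).aestronglyMeasurable]
    refine integral_congr_ae (ae_of_all _ fun ω => ?_)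
    simp only [dirCoord, div_eq_inv_mul]
  have hdiag : ∀ i : Fin n, i ≠ ⟨0, by omega⟩ →
      covMatrix P (fun ω => (euclNorm (ξ ω))⁻¹ • ξ ω) i i =
        ∫ x, dirCoord i x ^ 2 ∂(gpi ν v) := by
    intro i hi
    rw [hcov, gpi_mean_zero ν v i (hν0 i hi)]
    simp [pow_two]
  have h1 : (⟨1, by omega⟩ : Fin n) ≠ ⟨0, by omega⟩ := by simp
  refine ⟨?_, ?_, ?_, ?_⟩
  · intro i j hij
    rw [hcov]
    by_cases hi : i = ⟨0, by omega⟩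
    · have hj : j ≠ ⟨0, by omega⟩ := fun h => hij (hi.trans h.symm)
      rw [gpi_mean_zero ν v j (hν0 j hj)]
      simp_rw [mul_comm (dirCoord i _)]
      rw [gpi_cross_zero ν v j i (hν0 j hj) hij]
      simp
    · rw [gpi_mean_zero ν v i (hν0 i hi), gpi_cross_zero ν v i j (hν0 i hi) hij.symm]
      simp
  · rw [hcov, hE1, hE2]
    simp only [pow_two]
  · intro i j hi hj
    rw [hdiag i hi, hdiag j hj]
    exact gpi_sq_eq ν v i j (by rw [hν0 i hi, hν0 j hj])
  · rw [hdiag _ h1, hE2]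
    have hs := gpi_sum_sq ν v hv ⟨0, by omega⟩
    rw [← Finset.add_sum_erase _ _ (Finset.mem_univ (⟨0, by omega⟩ : Fin n))] at hs
    rw [Finset.sum_congr rfl (fun j hj => gpi_sq_eq ν v j ⟨1, by omega⟩
      (by rw [hν0 j (Finset.ne_of_mem_erase hj), hν0 _ h1]))] at hs
    rw [Finset.sum_const, Finset.card_erase_of_mem (Finset.mem_univ _), Finset.card_univ,
      Fintype.card_fin, nsmul_eq_mul, Nat.cast_sub (by omega), Nat.cast_one] at hs
    have hn1 : (n : ℝ) - 1 ≠ 0 := by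
      have : (3 : ℝ) ≤ n := by exact_mod_cast hn
      linarith
    field_simp
    linarith
end
end
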